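/- If the supremum B of branch-counts of ℵ₁-Kurepa trees is attained by some Kurepa tree, then the spectrum of ψ equals [ℵ₀, max(2^{ℵ₀}, B)]; i.e., ψ characterizes the cardinal max(2^{ℵ₀}, B). -/

import Mathlib

open Cardinal

/-- A set-theoretic tree: a transitive well-founded relation in which the
predecessors of any element are linearly ordered. -/
structure STree : Type 1 where
  σ : Type
  lt : σ → σ → Prop
  lt_trans : ∀ a b c, lt a b → lt b c → lt a c
  wf : WellFounded lt
  pred_linear : ∀ c a b, lt a c → lt b c → a = b ∨ lt a b ∨ lt b a

/-- The level (rank) of a node of a tree. -/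
noncomputable def STree.rank (T : STree) (x : T.σ) : Ordinal := (T.wf.apply x).rank

/-- A cofinal branch of height `κ`: a downward-closed chain meeting every level below `κ.ord`. -/
def STree.IsCofBranch (T : STree) (κ : Cardinal) (B : Set T.σ) : Prop :=
  (∀ x ∈ B, ∀ y, T.lt y x → y ∈ B) ∧
  (∀ x ∈ B, ∀ y ∈ B, x = y ∨ T.lt x y ∨ T.lt y x) ∧
  (∀ o : Ordinal, o < κ.ord → ∃ x ∈ B, T.rank x = o)

/-- The number of cofinal branches of height `κ`. -/
noncomputable def STree.branchCard (T : STree) (κ : Cardinal) : Cardinal :=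
  #{B : Set T.σ // T.IsCofBranch κ B}

/-- A `κ`-Kurepa tree: height `κ`, levels of size `< κ`, and at least `κ⁺` cofinal branches. -/
def IsKurepaTree (κ : Cardinal) (T : STree) : Prop :=
  ℵ₀ ≤ κ ∧
  (∀ x : T.σ, T.rank x < κ.ord) ∧
  (∀ o : Ordinal, o < κ.ord → ∃ x : T.σ, T.rank x = o) ∧
  (∀ o : Ordinal, #{x : T.σ // T.rank x = o} < κ) ∧
  Order.succ κ ≤ T.branchCard κ

/-- A model of the sentence `ψ`: a tree whose levels are indexed by an ℵ₁-like linear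
order `L` with a maximum element `⊤`; `V a` is the (countable, for `a ≠ ⊤`) set of nodes
at level `a`, and `V ⊤` is the set of maximal branches. -/
structure PsiModel : Type 1 where
  L : Type
  [linL : LinearOrder L]
  [topL : OrderTop L]
  alephOneLike : ∀ a : L, a ≠ ⊤ → (Set.Iic a).Countable
  V : L → Type
  level_countable : ∀ a : L, a ≠ ⊤ → Countable (V a)
  level_nonempty : ∀ a : L, Nonempty (V a)
  tlt : (Σ a : L, V a) → (Σ a : L, V a) → Prop
  tlt_level : ∀ x y, tlt x y → x.1 < y.1
  tlt_trans : ∀ x y z, tlt x y → tlt y z → tlt x z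
  tlt_total : ∀ x y z, tlt x z → tlt y z → x.1 < y.1 → tlt x y
  tlt_below : ∀ (x : Σ a : L, V a) (b : L), b < x.1 → ∃ y : V b, tlt ⟨b, y⟩ x
  pruned : ∀ x : Σ a : L, V a, x.1 ≠ ⊤ → ∃ y : V ⊤, tlt x ⟨⊤, y⟩
  branch_unique : ∀ x y : V ⊤, (∀ z, tlt z ⟨⊤, x⟩ ↔ tlt z ⟨⊤, y⟩) → x = y

attribute [instance] PsiModel.linL PsiModel.topL

/-- The cardinality of a model of `ψ` (the universe is `P ∪ L ∪ V` with `P` countably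
infinite). -/
noncomputable def PsiModel.card (M : PsiModel) : Cardinal :=
  ℵ₀ + #M.L + #(Σ a : M.L, M.V a)

/-- A substructure embedding between models of `ψ`, incorporating the derived properties:
the level order of the smaller model is an initial segment of that of the larger one,
non-maximal levels agree, and the tree order is preserved. -/
structure PsiEmbed (M N : PsiModel) where
  fL : M.L → N.L
  fL_mono : StrictMono fL
  fL_init : ∀ (a : M.L) (c : N.L), c ≤ fL a → ∃ b : M.L, fL b = c
  fV : ∀ a : M.L, M.V a → N.V (fL a)
  fV_inj : ∀ a : M.L, Function.Injective (fV a)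
  fV_surj : ∀ a : M.L, a ≠ ⊤ → Function.Surjective (fV a)
  tlt_iff : ∀ x y : (Σ a : M.L, M.V a),
    M.tlt x y ↔ N.tlt ⟨fL x.1, fV x.1 x.2⟩ ⟨fL y.1, fV y.1 y.2⟩

/-- The induced map on nodes. -/
def PsiEmbed.map {M N : PsiModel} (e : PsiEmbed M N) (x : Σ a : M.L, M.V a) :
    Σ a : N.L, N.V a := ⟨e.fL x.1, e.fV x.1 x.2⟩

/-- A model of `ψ` is maximal if it has no proper extension: every embedding into another
model of `ψ` is onto. -/
def PsiModel.MaximalModel (M : PsiModel) : Prop :=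
  ∀ (N : PsiModel) (e : PsiEmbed M N),
    Function.Surjective e.fL ∧ ∀ a : M.L, Function.Surjective (e.fV a)

/-- Two points are identified at level `a` if the sets they index agree up to level `a`. -/
def levelSetoid {σ L X : Type} [Preorder L] (l : σ → L) (S : X → Set σ) (a : L) : Setoid X where
  r x y := ∀ s, l s ≤ a → (s ∈ S x ↔ s ∈ S y)
  iseqv := ⟨fun _ _ _ => Iff.rfl, fun h s hs => (h s hs).symm,
    fun h₁ h₂ s hs => (h₁ s hs).trans (h₂ s hs)⟩

section levelSetoid

variable {σ L X : Type}

theorem levelSetoid_mono [Preorder L] (l : σ → L) (S : X → Set σ) {a b : L} (hab : a ≤ b)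
    {x y : X} (h : (levelSetoid l S b).r x y) : (levelSetoid l S a).r x y :=
  fun s hs => h s (hs.trans hab)

theorem levelSetoid_mk_mono [Preorder L] (l : σ → L) (S : X → Set σ) {a b : L} (hab : a ≤ b)
    {x y : X} (h : Quotient.mk (levelSetoid l S b) x = Quotient.mk _ y) :
    Quotient.mk (levelSetoid l S a) x = Quotient.mk _ y :=
  Quotient.sound (levelSetoid_mono l S hab (Quotient.exact h))

theorem eq_of_levelSetoid_mk [Preorder L] (l : σ → L) (S : X → Set σ)
    (hS : Function.Injective S) {x y : X}
    (h : ∀ s, Quotient.mk (levelSetoid l S (l s)) x = Quotient.mk _ y) : x = y :=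
  hS <| Set.ext fun s => Quotient.exact (h s) s le_rfl

theorem countable_quotient_of_map {C : Type} [Countable C] (r : Setoid X) (f : X → C)
    (hf : ∀ x y, f x = f y → r.r x y) : Countable (Quotient r) := by
  refine Function.Injective.countable (f := fun q : Quotient r => f q.out) fun p q h => ?_
  rw [← p.out_eq, ← q.out_eq]
  exact Quotient.sound (hf _ _ h)

/-- The order on the nodes `(a, class at level a)`. -/
def nodeLT [Preorder L] (l : σ → L) (S : X → Set σ)
    (p q : Σ a : L, Quotient (levelSetoid l S a)) : Prop :=
  p.1 < q.1 ∧ ∃ x : X, Quotient.mk _ x = p.2 ∧ Quotient.mk _ x = q.2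

theorem nodeLT_trans [Preorder L] (l : σ → L) (S : X → Set σ)
    (p q r : Σ a : L, Quotient (levelSetoid l S a)) :
    nodeLT l S p q → nodeLT l S q r → nodeLT l S p r := by
  rintro ⟨h₁, x, hx, hx'⟩ ⟨h₂, y, hy, hy'⟩
  exact ⟨h₁.trans h₂, y,
    (levelSetoid_mk_mono l S h₁.le (hy.trans hx'.symm)).trans hx, hy'⟩

theorem nodeLT_mk_iff [Preorder L] (l : σ → L) (S : X → Set σ)
    (p : Σ a : L, Quotient (levelSetoid l S a)) (b : L) (x : X) :
    nodeLT l S p ⟨b, Quotient.mk _ x⟩ ↔ p.1 < b ∧ Quotient.mk _ x = p.2 := by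
  constructor
  · rintro ⟨h, y, hy, hy'⟩
    exact ⟨h, (levelSetoid_mk_mono l S h.le hy'.symm).trans hy⟩
  · rintro ⟨h, hx⟩
    exact ⟨h, x, hx, rfl⟩

theorem nodeLT_total [Preorder L] (l : σ → L) (S : X → Set σ)
    (p q r : Σ a : L, Quotient (levelSetoid l S a)) (hp : nodeLT l S p r)
    (hq : nodeLT l S q r) (h : p.1 < q.1) : nodeLT l S p q := by
  obtain ⟨c, r⟩ := r
  induction r using Quotient.inductionOn with | _ z
  rw [nodeLT_mk_iff] at hp hq
  exact ⟨h, z, hp.2, hq.2⟩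

end levelSetoid

/-- The `ψ`-model whose maximal branches are the points of `X`. -/
def PsiModel.ofFamily {σ L X : Type} [LinearOrder L] [Nonempty X]
    (hL : ∀ a : L, (Set.Iic a).Countable) (l : σ → L) (S : X → Set σ)
    (hS : Function.Injective S)
    (hc : ∀ a, Countable (Quotient (levelSetoid l S a))) : PsiModel where
  L := WithTop L
  alephOneLike a ha := by
    lift a to L using ha
    refine ((hL a).image ((↑) : L → WithTop L)).mono fun b hb => ?_
    lift b to L using ne_top_of_le_ne_top WithTop.coe_ne_top hb
    exact ⟨b, WithTop.coe_le_coe.1 hb, rfl⟩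
  V a := Quotient (levelSetoid (fun s => (l s : WithTop L)) S a)
  level_countable a ha := by
    lift a to L using ha
    have := hc a
    exact countable_quotient_of_map _ (Quotient.mk (levelSetoid l S a))
      fun x y h s hs => Quotient.exact h s (WithTop.coe_le_coe.1 hs)
  level_nonempty a := (inferInstance : Nonempty X).map (Quotient.mk _)
  tlt := nodeLT _ S
  tlt_level _ _ h := h.1
  tlt_trans := nodeLT_trans _ S
  tlt_total := nodeLT_total _ S
  tlt_below := by
    rintro ⟨a, q⟩ b hb
    induction q using Quotient.inductionOn with | _ x
    exact ⟨Quotient.mk _ x, hb, x, rfl, rfl⟩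
  pruned := by
    rintro ⟨a, q⟩ ha
    induction q using Quotient.inductionOn with | _ x
    exact ⟨Quotient.mk _ x, lt_top_iff_ne_top.2 ha, x, rfl, rfl⟩
  branch_unique p q h := by
    induction p using Quotient.inductionOn with | _ x
    induction q using Quotient.inductionOn with | _ y
    congr 1
    refine eq_of_levelSetoid_mk (fun s => (l s : WithTop L)) S hS fun s => ?_
    have := (h ⟨l s, Quotient.mk _ x⟩).1 ((nodeLT_mk_iff ..).2 ⟨WithTop.coe_lt_top _, rfl⟩)
    exact ((nodeLT_mk_iff ..).1 this).2.symm

theorem PsiModel.card_le (M : PsiModel) {m : Cardinal} (hm : ℵ₀ ≤ m) (hL : #M.L ≤ m)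
    (hV : ∀ a, #(M.V a) ≤ m) : M.card ≤ m := by
  refine add_le_of_le hm (add_le_of_le hm hm hL) ?_
  rw [mk_sigma]
  calc Cardinal.sum (fun a => #(M.V a)) ≤ Cardinal.sum (fun _ : M.L => m) := sum_le_sum _ _ hV
    _ = #M.L * m := by simp
    _ ≤ m * m := by gcongr
    _ = m := mul_eq_self hm

theorem PsiModel.card_ofFamily {σ L X : Type} [LinearOrder L] [Nonempty X]
    (hL : ∀ a : L, (Set.Iic a).Countable) (l : σ → L) (S : X → Set σ)
    (hS : Function.Injective S) (hc : ∀ a, Countable (Quotient (levelSetoid l S a)))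
    (hX : ℵ₀ ≤ #X) (hLX : #L ≤ #X) : (PsiModel.ofFamily hL l S hS hc).card = #X := by
  apply le_antisymm
  · refine PsiModel.card_le _ hX ?_ fun a => mk_quotient_le
    change #(Option L) ≤ _
    rw [mk_option]
    exact add_le_of_le hX hLX (one_le_aleph0.trans hX)
  · have : Function.Injective (fun x : X =>
        (⟨⊤, Quotient.mk _ x⟩ : Σ a, (PsiModel.ofFamily hL l S hS hc).V a)) := by
      intro x y h
      exact eq_of_levelSetoid_mk (fun s => (l s : WithTop L)) S hS fun s =>
        levelSetoid_mk_mono _ S le_top (eq_of_heq (Sigma.mk.inj h).2)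
    exact (mk_le_of_injective this).trans (self_le_add_left _ _)

theorem exists_psiModel_of_le_continuum {κ : Cardinal} (h₀ : ℵ₀ ≤ κ) (h : κ ≤ 2 ^ ℵ₀) :
    ∃ M : PsiModel, M.card = κ := by
  have h' : κ ≤ #(Set ℕ) := by simpa using h
  obtain ⟨X, rfl⟩ := le_mk_iff_exists_set.1 h'
  have : Nonempty X := mk_ne_zero_iff.1 (aleph0_pos.trans_le h₀).ne'
  refine ⟨_, PsiModel.card_ofFamily (L := ℕ) (fun a => Set.to_countable _) id
    (fun x : X => x.1) Subtype.val_injective (fun a => ?_) h₀ (by simpa using h₀)⟩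
  exact countable_quotient_of_map (C := Set (Set.Iic a)) _ (fun x => {n | n.1 ∈ x.1})
    fun x y hxy s hs => Set.ext_iff.1 hxy ⟨s, hs⟩

theorem countable_Iic_toType_omega (a : (aleph 1).ord.ToType) : (Set.Iic a).Countable := by
  rw [← Set.Iio_insert]
  refine Set.Countable.insert _ ?_
  rw [← le_aleph0_iff_set_countable, ← lt_aleph_one_iff]
  exact (mk_Iio_lt a (by simp)).trans_eq (mk_ord_toType _)

theorem exists_psiModel_of_le_branchCard {T : STree} (hT : IsKurepaTree (aleph 1) T)
    {κ : Cardinal} (h₁ : aleph 1 ≤ κ) (h : κ ≤ T.branchCard (aleph 1)) :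
    ∃ M : PsiModel, M.card = κ := by
  obtain ⟨-, hr, -, hlev, -⟩ := hT
  obtain ⟨X, rfl⟩ := le_mk_iff_exists_set.1 h
  have h₀ : ℵ₀ ≤ #X := (aleph0_le_aleph 1).trans h₁
  have : Nonempty X := mk_ne_zero_iff.1 (aleph0_pos.trans_le h₀).ne'
  refine ⟨_, PsiModel.card_ofFamily countable_Iic_toType_omega
    (fun s => Ordinal.ToType.mk ⟨T.rank s, hr s⟩)
    (fun x : X => x.1.1) (Subtype.val_injective.comp Subtype.val_injective) (fun a => ?_) h₀
    (by simpa using h₁)⟩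
  obtain ⟨⟨o, ho⟩, rfl⟩ := Ordinal.ToType.mk.surjective a
  choose f hf hfr using fun x : X => x.1.2.2.2 o ho
  have : Countable {s // T.rank s = o} := mk_le_aleph0_iff.1 (lt_aleph_one_iff.1 (hlev o))
  refine countable_quotient_of_map _ (fun x => (⟨f x, hfr x⟩ : {s // T.rank s = o})) ?_
  have key : ∀ x y : X, f x = f y → ∀ s, T.rank s ≤ o → s ∈ x.1.1 → s ∈ y.1.1 := by
    intro x y hxy s hs hx
    rcases x.1.2.2.1 s hx _ (hf x) with h | h | h
    · rw [h, hxy]; exact hf y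
    · exact y.1.2.1 _ (hf y) _ (hxy ▸ h)
    · have : T.rank (f x) < T.rank s := Acc.rank_lt_of_rel _ h
      rw [hfr x] at this
      exact absurd this hs.not_gt
  intro x y hxy s hs
  have hxy := congrArg Subtype.val hxy
  have hs : T.rank s ≤ o := Subtype.coe_le_coe.2 (Ordinal.ToType.mk.le_iff_le.1 hs)
  exact ⟨key x y hxy s hs, key y x hxy.symm s hs⟩

/-- The tree of height `ω₁` whose nodes are the classes of `X` at each level. -/
def STree.ofFamily {σ X : Type} (l : σ → (aleph 1).ord.ToType) (S : X → Set σ) : STree where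
  σ := Σ a, Quotient (levelSetoid l S a)
  lt := nodeLT l S
  lt_trans := nodeLT_trans l S
  wf := Subrelation.wf (fun h => h.1) (InvImage.wf Sigma.fst wellFounded_lt)
  pred_linear := by
    rintro ⟨c, r⟩ ⟨a, p⟩ ⟨b, q⟩ hp hq
    rcases lt_trichotomy a b with h | rfl | h
    · exact Or.inr (Or.inl (nodeLT_total l S _ _ _ hp hq h))
    · induction r using Quotient.inductionOn with | _ z
      rw [nodeLT_mk_iff] at hp hq
      exact Or.inl (Sigma.ext rfl (heq_of_eq (hp.2.symm.trans hq.2)))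
    · exact Or.inr (Or.inr (nodeLT_total l S _ _ _ hq hp h))

theorem STree.rank_ofFamily {σ X : Type} (l : σ → (aleph 1).ord.ToType) (S : X → Set σ)
    (p : (STree.ofFamily l S).σ) : (STree.ofFamily l S).rank p = (p.1.toOrd : Ordinal) := by
  induction p using (STree.ofFamily l S).wf.induction with | _ p ih
  obtain ⟨a, q⟩ := p
  induction q using Quotient.inductionOn with | _ x
  apply le_antisymm
  · refine (Acc.rank_eq _).trans_le <| Ordinal.iSup_le fun ⟨r, hr⟩ => Order.succ_le_of_lt ?_
    refine (ih r hr).trans_lt ?_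
    exact (Ordinal.ToType.mk.symm.lt_iff_lt.2 hr.1 :)
  · refine le_of_forall_lt fun o ho => ?_
    let b : (aleph 1).ord.ToType := Ordinal.ToType.mk ⟨o, ho.trans a.toOrd.2⟩
    have hb : (b.toOrd : Ordinal) = o := by simp [b]
    have hba : b < a := by
      rw [← Ordinal.ToType.mk.symm.lt_iff_lt, ← Subtype.coe_lt_coe, hb]
      exact ho
    have hlt : (STree.ofFamily l S).lt ⟨b, Quotient.mk _ x⟩ ⟨a, Quotient.mk _ x⟩ :=
      ⟨hba, x, rfl, rfl⟩
    rw [← hb, ← ih _ hlt]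
    exact Acc.rank_lt_of_rel _ hlt

theorem STree.le_branchCard_ofFamily {σ X : Type} (l : σ → (aleph 1).ord.ToType)
    (S : X → Set σ) (hS : Function.Injective S) :
    #X ≤ (STree.ofFamily l S).branchCard (aleph 1) := by
  refine mk_le_of_injective (f := fun x => ⟨{p | Quotient.mk _ x = p.2}, ?_, ?_, ?_⟩) ?_
  · rintro p hp q ⟨hqp, y, hy, hy'⟩
    exact (levelSetoid_mk_mono l S hqp.le (Eq.trans hp hy'.symm)).trans hy
  · rintro ⟨a, p⟩ hp ⟨b, q⟩ hq
    rcases lt_trichotomy a b with h | rfl | h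
    · exact Or.inr (Or.inl ⟨h, x, hp, hq⟩)
    · exact Or.inl (Sigma.ext rfl (heq_of_eq (Eq.trans (Eq.symm hp) hq)))
    · exact Or.inr (Or.inr ⟨h, x, hq, hp⟩)
  · intro o ho
    exact ⟨⟨Ordinal.ToType.mk ⟨o, ho⟩, Quotient.mk _ x⟩, rfl,
      (STree.rank_ofFamily l S _).trans (by simp)⟩
  · intro x y h
    refine eq_of_levelSetoid_mk l S hS fun s => ?_
    have h' := Set.ext_iff.1 (congrArg Subtype.val h) ⟨l s, Quotient.mk _ x⟩
    exact (h'.1 rfl).symm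

theorem isKurepaTree_ofFamily {σ X : Type} (l : σ → (aleph 1).ord.ToType)
    (S : X → Set σ) (hS : Function.Injective S)
    (hc : ∀ a, Countable (Quotient (levelSetoid l S a))) (hX : aleph 1 < #X) :
    IsKurepaTree (aleph 1) (STree.ofFamily l S) := by
  have hbr := STree.le_branchCard_ofFamily l S hS
  refine ⟨aleph0_le_aleph 1, fun p => ?_, fun o ho => ?_, fun o => ?_,
    Order.succ_le_of_lt (hX.trans_le hbr)⟩
  · rw [STree.rank_ofFamily]
    exact p.1.toOrd.2
  · obtain ⟨x⟩ : Nonempty X := mk_ne_zero_iff.1 (bot_le.trans_lt hX).ne'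
    exact ⟨⟨Ordinal.ToType.mk ⟨o, ho⟩, Quotient.mk _ x⟩,
      (STree.rank_ofFamily l S _).trans (by simp)⟩
  · rw [lt_aleph_one_iff, mk_le_aleph0_iff]
    rcases isEmpty_or_nonempty {p // (STree.ofFamily l S).rank p = o} with h | ⟨⟨p, rfl⟩⟩
    · infer_instance
    · have := hc p.1
      have hsub : {q | (STree.ofFamily l S).rank q = (STree.ofFamily l S).rank p} ⊆
          Set.range (Sigma.mk (β := fun a => Quotient (levelSetoid l S a)) p.1) := by
        rintro ⟨b, q⟩ hq
        replace hq := (STree.rank_ofFamily l S _).symm.trans (hq.trans (STree.rank_ofFamily l S p))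
        obtain rfl := Ordinal.ToType.mk.symm.injective (Subtype.ext hq)
        exact ⟨q, rfl⟩
      exact (Set.countable_range _).mono hsub

theorem mk_le_aleph_one_of_countable_Iic {α : Type} [LinearOrder α]
    (h : ∀ a : α, (Set.Iic a).Countable) : #α ≤ aleph 1 := by
  by_contra! hlt
  obtain ⟨s, hs⟩ := le_mk_iff_exists_set.1 hlt.le
  have hcov : (⋃ i : s, Set.Iic i.1) = Set.univ := by
    refine Set.eq_univ_of_forall fun a => ?_
    by_contra ha
    have hsub : s ⊆ Set.Iic a := fun i hi => by
      by_contra hia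
      exact ha (Set.mem_iUnion.2 ⟨⟨i, hi⟩, (not_le.1 hia).le⟩)
    have := le_aleph0_iff_set_countable.2 ((h a).mono hsub)
    rw [hs] at this
    exact this.not_gt aleph0_lt_aleph_one
  refine hlt.not_ge ?_
  calc #α = #(⋃ i : s, Set.Iic i.1) := by rw [hcov, mk_univ]
    _ ≤ Cardinal.sum fun i : s => #(Set.Iic i.1) := mk_iUnion_le_sum_mk
    _ ≤ Cardinal.sum fun _ : s => ℵ₀ :=
      sum_le_sum _ _ fun i => le_aleph0_iff_set_countable.2 (h i.1)
    _ = aleph 1 * ℵ₀ := by rw [sum_const', hs]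
    _ ≤ aleph 1 := mul_le_of_le (aleph0_le_aleph 1) le_rfl (aleph0_le_aleph 1)

namespace PsiModel

variable (M : PsiModel)

theorem countable_Iic_ne_top (a : {a : M.L // a ≠ ⊤}) : (Set.Iic a).Countable :=
  (M.alephOneLike a.1 a.2).preimage Subtype.val_injective

theorem mk_ne_top_le : #{a : M.L // a ≠ ⊤} ≤ aleph 1 :=
  mk_le_aleph_one_of_countable_Iic M.countable_Iic_ne_top

theorem mk_L_le : #M.L ≤ aleph 1 := by
  rw [← mk_univ, ← Set.compl_union_self {(⊤ : M.L)}]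
  refine (mk_union_le _ _).trans (add_le_of_le (aleph0_le_aleph 1) M.mk_ne_top_le ?_)
  simpa using one_le_aleph0.trans (aleph0_le_aleph 1)

/-- The nodes below a maximal branch. -/
def below (x : M.V ⊤) : Set (Σ a : {a : M.L // a ≠ ⊤}, M.V a.1) :=
  {z | M.tlt ⟨z.1.1, z.2⟩ ⟨⊤, x⟩}

theorem below_injective : Function.Injective M.below := by
  intro x y h
  refine M.branch_unique x y fun ⟨a, v⟩ => ?_
  by_cases ha : a = ⊤
  · exact iff_of_false (fun h => (M.tlt_level _ _ h).ne ha) fun h => (M.tlt_level _ _ h).ne ha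
  · exact Set.ext_iff.1 h ⟨⟨a, ha⟩, v⟩

theorem mem_below_iff {x : M.V ⊤} {c : M.L} {y : M.V c} (hy : M.tlt ⟨c, y⟩ ⟨⊤, x⟩)
    {z : Σ a : {a : M.L // a ≠ ⊤}, M.V a.1} (hz : z.1.1 < c) :
    z ∈ M.below x ↔ M.tlt ⟨z.1.1, z.2⟩ ⟨c, y⟩ :=
  ⟨fun h => M.tlt_total _ _ _ h hy hz, fun h => M.tlt_trans _ _ _ h hy⟩

theorem mk_top_le_of_countable (h : Countable {a : M.L // a ≠ ⊤}) : #(M.V ⊤) ≤ 2 ^ ℵ₀ := by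
  have : ∀ a : {a : M.L // a ≠ ⊤}, Countable (M.V a.1) := fun a => M.level_countable a.1 a.2
  refine (mk_le_of_injective M.below_injective).trans ?_
  rw [mk_set]
  exact power_le_power_left two_ne_zero mk_le_aleph0

theorem exists_kurepaTree (h : 2 ^ ℵ₀ < #(M.V ⊤)) :
    ∃ T : STree, IsKurepaTree (aleph 1) T ∧ #(M.V ⊤) ≤ T.branchCard (aleph 1) := by
  have hunc : ¬ Countable {a : M.L // a ≠ ⊤} := fun hc =>
    (M.mk_top_le_of_countable hc).not_gt h
  have hcard : #{a : M.L // a ≠ ⊤} = #(aleph 1).ord.ToType := by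
    rw [mk_ord_toType]
    refine le_antisymm M.mk_ne_top_le (not_lt.1 fun hlt => hunc ?_)
    exact mk_le_aleph0_iff.1 (lt_aleph_one_iff.1 hlt)
  obtain ⟨e⟩ := Cardinal.eq.1 hcard
  refine ⟨STree.ofFamily (fun z => e z.1) M.below,
    isKurepaTree_ofFamily _ _ M.below_injective (fun a => ?_)
      (lt_of_le_of_lt (by simpa using aleph_one_le_continuum) h),
    STree.le_branchCard_ofFamily _ _ M.below_injective⟩
  obtain ⟨c, hc⟩ : ∃ c : {a : M.L // a ≠ ⊤}, ∀ b, e b ≤ a → b < c := by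
    by_contra! hno
    refine hunc (Set.countable_univ_iff.1 ?_)
    refine (Set.Countable.biUnion ((countable_Iic_toType_omega a).preimage e.injective)
      (fun b _ => M.countable_Iic_ne_top b)).mono fun c _ => ?_
    obtain ⟨b, hb, hcb⟩ := hno c
    exact Set.mem_biUnion hb hcb
  have := M.level_countable c.1 c.2
  choose f hf using fun x : M.V ⊤ => M.tlt_below ⟨⊤, x⟩ c.1 (lt_top_iff_ne_top.2 c.2)
  refine countable_quotient_of_map _ f fun x y hxy z hz => ?_
  rw [M.mem_below_iff (hf x) (hc _ hz), M.mem_below_iff (hf y) (hc _ hz), hxy]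

end PsiModel

/-- If the supremum `B` of branch-counts of `ℵ₁`-Kurepa trees is attained, then the
spectrum of `ψ` equals `[ℵ₀, max (2^ℵ₀) B]`, i.e. `ψ` characterizes `max (2^ℵ₀) B`. -/
theorem stmt17 (B : Cardinal)
    (hB : B = sSup {lam | ∃ T : STree, IsKurepaTree (aleph 1) T ∧
      T.branchCard (aleph 1) = lam})
    (hmax : ∃ T : STree, IsKurepaTree (aleph 1) T ∧ T.branchCard (aleph 1) = B) :
    {κ : Cardinal | ∃ M : PsiModel, M.card = κ} = Set.Icc ℵ₀ (max (2 ^ ℵ₀) B) := by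
  have hle : ∀ T : STree, IsKurepaTree (aleph 1) T → T.branchCard (aleph 1) ≤ B := by
    intro T hT
    rw [hB]
    refine le_csSup ?_ ⟨T, hT, rfl⟩
    -- an unbounded set of branch counts would have junk supremum `0`
    by_contra hbdd
    rw [csSup_of_not_bddAbove hbdd, csSup_empty] at hB
    obtain ⟨T', hT', rfl⟩ := hmax
    exact (Order.succ_le_iff.1 hT'.2.2.2.2).not_ge (hB.le.trans bot_le)
  have h₁ : aleph 1 ≤ max (2 ^ ℵ₀) B :=
    le_max_of_le_left (by simpa using aleph_one_le_continuum)
  ext κ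
  constructor
  · rintro ⟨M, rfl⟩
    refine ⟨(self_le_add_right ℵ₀ _).trans (self_le_add_right _ _),
      M.card_le ((aleph0_le_aleph 1).trans h₁) (M.mk_L_le.trans h₁) fun a => ?_⟩
    by_cases ha : a = ⊤
    · subst ha
      refine le_max_iff.2 (or_iff_not_imp_left.2 fun h => ?_)
      obtain ⟨T, hT, hMT⟩ := M.exists_kurepaTree (not_le.1 h)
      exact hMT.trans (hle T hT)
    · have := M.level_countable a ha
      exact mk_le_aleph0.trans ((aleph0_le_aleph 1).trans h₁)
  · rintro ⟨h₀, hκ⟩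
    rcases le_or_gt κ (2 ^ ℵ₀) with h | h
    · exact exists_psiModel_of_le_continuum h₀ h
    · obtain ⟨T, hT, rfl⟩ := hmax
      refine exists_psiModel_of_le_branchCard hT ?_ ((le_max_iff.1 hκ).resolve_left h.not_ge)
      exact le_trans (by simpa using aleph_one_le_continuum) h.le
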